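/- Let g be a positive integer, let (G,σ) be a connected g-wide signed graph, and let x,y be vertices of (G,σ) lying on a common negative cycle of length g with ad_{(G,σ)}(x,y) = p < 0. Then ad_{EDC(G,σ)}(x⁺,y⁻) = ad_{EDC(G,σ)}(x⁻,y⁺) = −p. Moreover, if d_G(x,y) = ⌊g/2⌋, then ad_{EDC(G,σ)}(x⁺,y⁺) = ad_{EDC(G,σ)}(x⁻,y⁻) = g + p = ⌈g/2⌉; otherwise ad_{EDC(G,σ)}(x⁺,y⁺) = ad_{EDC(G,σ)}(x⁻,y⁻) = p − 1. -/

import Mathlib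

open SimpleGraph

namespace SignedPaper

variable {V : Type*} {W : Type*}

/-- The product of the signs (values of `σ`) along the darts of a walk. -/
def walkSign {G : SimpleGraph V} (σ : V → V → ℤ) {a b : V} (w : G.Walk a b) : ℤ :=
  (w.darts.map fun d => σ d.toProd.1 d.toProd.2).prod

/-- The length of a walk in a weighted signed graph: the sum of the absolute
values of the weights of its edges, with multiplicity. -/
def walkWLen {G : SimpleGraph V} (ω : V → V → ℤ) {a b : V} (w : G.Walk a b) : ℕ :=
  (w.darts.map fun d => (ω d.toProd.1 d.toProd.2).natAbs).sum

/-- Walk-girth of type `ij` of a signed graph: the length of a shortest closed walk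
which is negative iff `neg` and of odd length iff `odd` (`⊤` if none exists). -/
noncomputable def sGirth (G : SimpleGraph V) (σ : V → V → ℤ) (neg odd : Bool) : ℕ∞ :=
  sInf {n : ℕ∞ | ∃ (a : V) (w : G.Walk a a), (w.length : ℕ∞) = n ∧
    (walkSign σ w < 0 ↔ neg = true) ∧ (Odd w.length ↔ odd = true)}

/-- Walk-girth of type `ij` of a weighted signed graph. -/
noncomputable def wGirth (G : SimpleGraph V) (ω : V → V → ℤ) (neg odd : Bool) : ℕ∞ :=
  sInf {n : ℕ∞ | ∃ (a : V) (w : G.Walk a a), (walkWLen ω w : ℕ∞) = n ∧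
    (walkSign ω w < 0 ↔ neg = true) ∧ (Odd (walkWLen ω w) ↔ odd = true)}

/-- A graph homomorphism is a homomorphism of signed graphs if it preserves
the signs of all closed walks. -/
def IsSignedHom {G : SimpleGraph V} {H : SimpleGraph W} (σ : V → V → ℤ) (π : W → W → ℤ)
    (f : G →g H) : Prop :=
  ∀ (a : V) (w : G.Walk a a), walkSign π (w.map f) = walkSign σ w

/-- A signed graph is `g`-wide if it has no positive closed walk of odd length, and
every negative closed walk has length at least `g` and of the same parity as `g`. -/
def gWide (G : SimpleGraph V) (σ : V → V → ℤ) (g : ℕ) : Prop :=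
  (∀ (a : V) (w : G.Walk a a), 0 < walkSign σ w → ¬ Odd w.length) ∧
  (∀ (a : V) (w : G.Walk a a), walkSign σ w < 0 → g ≤ w.length ∧ (Odd w.length ↔ Odd g))

open Classical in
/-- The algebraic distance between two vertices of a signed graph. -/
noncomputable def adist (G : SimpleGraph V) (σ : V → V → ℤ) (u v : V) : ℤ :=
  if ∃ w : G.Walk u v, w.IsPath ∧ w.length = G.dist u v ∧ 0 < walkSign σ w
  then (G.dist u v : ℤ) else -(G.dist u v : ℤ)

/-- The underlying graph of the Extended Double Cover of a signed graph:
`(v, true)` plays the role of `v⁺` and `(v, false)` of `v⁻`. -/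
def EDCsg (G : SimpleGraph V) (σ : V → V → ℤ) (hσ : ∀ u v, σ u v = σ v u) :
    SimpleGraph (V × Bool) where
  Adj x y := (x.1 = y.1 ∧ x.2 ≠ y.2) ∨ (G.Adj x.1 y.1 ∧ (x.2 = y.2 ↔ 0 < σ x.1 y.1))
  symm.symm := fun x y h => by
    rcases h with ⟨h1, h2⟩ | ⟨ha, hb⟩
    · exact Or.inl ⟨h1.symm, h2.symm⟩
    · refine Or.inr ⟨ha.symm, ?_⟩
      rw [hσ y.1 x.1, eq_comm]
      exact hb
  loopless.irrefl := fun x h => by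
    rcases h with ⟨-, h⟩ | ⟨h, -⟩
    · exact h rfl
    · exact G.loopless.irrefl _ h

open Classical in
/-- The signature of the Extended Double Cover: edges `v⁺v⁻` are negative,
all other edges are positive. -/
noncomputable def edcSign : V × Bool → V × Bool → ℤ := fun x y =>
  if x.1 = y.1 then -1 else 1

/-- The underlying graph of the Extended Double Cover of a weighted signed graph. -/
def EDCw (G : SimpleGraph V) : SimpleGraph (V × Bool) where
  Adj x y := (x.1 = y.1 ∧ x.2 ≠ y.2) ∨ G.Adj x.1 y.1
  symm.symm := fun x y h => by
    rcases h with ⟨h1, h2⟩ | h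
    · exact Or.inl ⟨h1.symm, h2.symm⟩
    · exact Or.inr h.symm
  loopless.irrefl := fun x h => by
    rcases h with ⟨-, h⟩ | h
    · exact h rfl
    · exact G.loopless.irrefl _ h

open Classical in
/-- The weights of the Extended Double Cover of a weighted signed graph `(G, ω)`. -/
noncomputable def EDCwWeight (ω : V → V → ℤ) : V × Bool → V × Bool → ℤ := fun x y =>
  if x.1 = y.1 then -1
  else if x.2 = y.2 then (if 0 < ω x.1 y.1 then ω x.1 y.1 else ω x.1 y.1 - 1)
  else (if 0 < ω x.1 y.1 then -(ω x.1 y.1 + 1) else -(ω x.1 y.1))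

/-- `G` has a `K₄`-minor: there are four disjoint nonempty connected branch sets,
pairwise joined by an edge. -/
def HasK4Minor (G : SimpleGraph V) : Prop :=
  ∃ S : Fin 4 → Set V,
    (∀ i, (G.induce (S i)).Connected) ∧
    (∀ i j, i ≠ j → Disjoint (S i) (S j)) ∧
    (∀ i j, i ≠ j → ∃ u ∈ S i, ∃ v ∈ S j, G.Adj u v)

/-- A signed graph `(B, π)` is SP-complete if every connected signed graph whose
underlying graph is finite and `K₄`-minor-free and which satisfies the conclusion of
the no-homomorphism lemma with respect to `(B, π)` admits a homomorphism to `(B, π)`. -/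
def SPComplete (B : SimpleGraph W) (π : W → W → ℤ) : Prop :=
  ∀ (V' : Type) (G : SimpleGraph V') (σ : V' → V' → ℤ),
    Finite V' → (∀ u v, σ u v = σ v u) →
    (∀ u v, G.Adj u v → σ u v = 1 ∨ σ u v = -1) →
    G.Connected → ¬ HasK4Minor G →
    (∀ neg odd : Bool, sGirth B π neg odd ≤ sGirth G σ neg odd) →
    ∃ f : G →g B, IsSignedHom σ π f

/-- The cylinder `C_{2a} □ P_b` on vertex set `{0,…,2a-1} × {0,…,b-1}`. -/
def cylT (a b : ℕ) : SimpleGraph (Fin (2 * a) × Fin b) where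
  Adj x y := (x.1 = y.1 ∧ ((x.2.val : ℤ) - (y.2.val : ℤ)).natAbs = 1) ∨
    (x.2 = y.2 ∧ (((x.1.val : ℤ) - (y.1.val : ℤ)).natAbs = 1 ∨
      ((x.1.val : ℤ) - (y.1.val : ℤ)).natAbs = 2 * a - 1))
  symm.symm := fun x y h => by
    rcases h with ⟨h1, h2⟩ | ⟨h1, h2 | h2⟩
    · exact Or.inl ⟨h1.symm, by omega⟩
    · exact Or.inr ⟨h1.symm, Or.inl (by omega)⟩
    · exact Or.inr ⟨h1.symm, Or.inr (by omega)⟩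
  loopless.irrefl := fun x h => by
    have hpos : 0 < 2 * a := x.1.pos
    rcases h with ⟨-, h⟩ | ⟨-, h | h⟩ <;> omega

/-- Two vertices of the cylinder are antipodal if `|Δi| + |Δj| = a + b - 1`. -/
def antip (a b : ℕ) (x y : Fin (2 * a) × Fin b) : Prop :=
  ((x.1.val : ℤ) - (y.1.val : ℤ)).natAbs + ((x.2.val : ℤ) - (y.2.val : ℤ)).natAbs = a + b - 1

/-- The twisted tube: the cylinder together with the antipodal edges `J`. -/
def twistedTube (a b : ℕ) : SimpleGraph (Fin (2 * a) × Fin b) where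
  Adj x y := (cylT a b).Adj x y ∨ (x ≠ y ∧ antip a b x y)
  symm.symm := fun x y h => by
    rcases h with h | ⟨hne, h⟩
    · exact Or.inl ((cylT a b).symm.symm _ _ h)
    · refine Or.inr ⟨hne.symm, ?_⟩
      unfold antip at h ⊢
      omega
  loopless.irrefl := fun x h => by
    rcases h with h | ⟨hne, -⟩
    · exact (cylT a b).loopless.irrefl x h
    · exact hne rfl

/-- The signature of the twisted tube: antipodal edges (the set `J`) are negative,
all other edges are positive. -/
def ttSign (a b : ℕ) (x y : Fin (2 * a) × Fin b) : ℤ :=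
  if ((x.1.val : ℤ) - (y.1.val : ℤ)).natAbs + ((x.2.val : ℤ) - (y.2.val : ℤ)).natAbs
      = a + b - 1 then -1 else 1

/-- The underlying graph of the signed projective cube `SPC(k)`: vertices are elements
of `ℤ₂^k`, adjacent if they differ in exactly one coordinate or in all coordinates. -/
def spcGraph (k : ℕ) : SimpleGraph (Fin k → ZMod 2) where
  Adj x y := x ≠ y ∧ (hammingDist x y = 1 ∨ hammingDist x y = k)
  symm.symm := fun x y h => ⟨h.1.symm, by rw [hammingDist_comm]; exact h.2⟩
  loopless.irrefl := fun x h => h.1 rfl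

/-- The signature of `SPC(k)`: an edge is negative iff its endpoints differ in
all coordinates. -/
def spcSign (k : ℕ) (x y : Fin k → ZMod 2) : ℤ :=
  if hammingDist x y = k then -1 else 1

lemma spcSign_symm (k : ℕ) : ∀ x y : Fin k → ZMod 2, spcSign k x y = spcSign k y x := by
  intro x y
  unfold spcSign
  rw [hammingDist_comm]

/-- The function `f_g`. -/
def fg (g : ℕ) (x : ℤ) : ℤ := if 0 < x then x else (g : ℤ) + x

/-- `(G, σ)` is (a realization of) the signed graph `T_g(p,q,r)`: three distinguished
vertices `x, y, z` joined by six internally disjoint paths of prescribed lengths and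
signs, whose edges exhaust `G`. -/
def IsTgpqr (G : SimpleGraph V) (σ : V → V → ℤ) (g : ℕ) (p q r : ℤ) : Prop :=
  ∃ (x y z : V) (P1 P2 : G.Walk x y) (Q1 Q2 : G.Walk y z) (R1 R2 : G.Walk z x),
    x ≠ y ∧ y ≠ z ∧ z ≠ x ∧
    P1.IsPath ∧ P2.IsPath ∧ Q1.IsPath ∧ Q2.IsPath ∧ R1.IsPath ∧ R2.IsPath ∧
    P1.length = p.natAbs ∧ P2.length = g - p.natAbs ∧
    Q1.length = q.natAbs ∧ Q2.length = g - q.natAbs ∧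
    R1.length = r.natAbs ∧ R2.length = g - r.natAbs ∧
    walkSign σ P1 = Int.sign p ∧ walkSign σ P2 = -Int.sign p ∧
    walkSign σ Q1 = Int.sign q ∧ walkSign σ Q2 = -Int.sign q ∧
    walkSign σ R1 = Int.sign r ∧ walkSign σ R2 = -Int.sign r ∧
    (∀ e ∈ G.edgeSet, e ∈ P1.edges ∨ e ∈ P2.edges ∨ e ∈ Q1.edges ∨ e ∈ Q2.edges ∨
      e ∈ R1.edges ∨ e ∈ R2.edges) ∧
    (∀ i j : Fin 6, i ≠ j → ∀ v : V,
      v ∈ (![{v | v ∈ P1.support}, {v | v ∈ P2.support}, {v | v ∈ Q1.support},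
            {v | v ∈ Q2.support}, {v | v ∈ R1.support}, {v | v ∈ R2.support}] : Fin 6 → Set V) i →
      v ∈ (![{v | v ∈ P1.support}, {v | v ∈ P2.support}, {v | v ∈ Q1.support},
            {v | v ∈ Q2.support}, {v | v ∈ R1.support}, {v | v ∈ R2.support}] : Fin 6 → Set V) j →
      v = x ∨ v = y ∨ v = z)


/-!
Between two fixed vertices only two numbers matter: the length `n₊` of a shortest positive walk and
the length `n₋` of a shortest negative walk. The algebraic distance is `n₊` if `n₊ ≤ n₋`, and `-n₋`
otherwise. A walk of the Extended Double Cover is a walk of `G` with `k` traversals of edges `v⁺v⁻`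
inserted; it has sign `(-1) ^ k`, and it changes sheets iff the sign of its projection times
`(-1) ^ k` is `-1`. With `s = 1` for equal and `s = -1` for different sheets, a shortest positive
walk of the cover is therefore as long as a shortest walk of sign `s` in `G`, and a shortest
negative one is longer by one than a shortest walk of sign `-s`. Finally, a vertex on a shortest
negative closed walk splits it into two arcs of opposite signs, each of which is shortest of its
sign, as a shorter replacement would give a shorter negative closed walk; thus `n₊ + n₋ = g`.
-/

section WalkSign

variable {G : SimpleGraph V} {σ : V → V → ℤ} {u v w : V}

@[simp]
theorem walkSign_nil : walkSign σ (Walk.nil : G.Walk u u) = 1 := by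
  simp [walkSign]

@[simp]
theorem walkSign_cons (h : G.Adj u v) (p : G.Walk v w) :
    walkSign σ (Walk.cons h p) = σ u v * walkSign σ p := by
  simp [walkSign]

@[simp]
theorem walkSign_append (p : G.Walk u v) (q : G.Walk v w) :
    walkSign σ (p.append q) = walkSign σ p * walkSign σ q := by
  simp [walkSign]

theorem walkSign_reverse (hsymm : ∀ u v, σ u v = σ v u) (p : G.Walk u v) :
    walkSign σ p.reverse = walkSign σ p := by
  induction p with
  | nil => rfl
  | cons h p ih => simp [ih, hsymm, mul_comm]

theorem walkSign_eq_one_or_neg_one (hpm : ∀ u v, G.Adj u v → σ u v = 1 ∨ σ u v = -1)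
    (p : G.Walk u v) : walkSign σ p = 1 ∨ walkSign σ p = -1 := by
  induction p with
  | nil => simp
  | cons h p ih => rcases hpm _ _ h with hσ | hσ <;> rcases ih with hp | hp <;> simp [hσ, hp]

/-- The walk `p` has sign `s` and is shortest among the walks of sign `s` between its endpoints. -/
structure IsShortestOfSign (σ : V → V → ℤ) (s : ℤ) (p : G.Walk u v) : Prop where
  walkSign_eq : walkSign σ p = s
  length_le : ∀ q : G.Walk u v, walkSign σ q = s → p.length ≤ q.length

end WalkSign

section AlgebraicDistance

variable {G : SimpleGraph V} {σ : V → V → ℤ} {u v : V} {p n : G.Walk u v}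

theorem dist_eq_min_length (hpm : ∀ u v, G.Adj u v → σ u v = 1 ∨ σ u v = -1)
    (hp : IsShortestOfSign σ 1 p) (hn : IsShortestOfSign σ (-1) n) :
    G.dist u v = min p.length n.length := by
  apply le_antisymm (le_min (dist_le p) (dist_le n))
  obtain ⟨q, hq⟩ := p.reachable.exists_walk_length_eq_dist
  rw [← hq]
  rcases walkSign_eq_one_or_neg_one hpm q with h | h
  · exact min_le_of_left_le (hp.length_le q h)
  · exact min_le_of_right_le (hn.length_le q h)

theorem adist_eq_ite (hpm : ∀ u v, G.Adj u v → σ u v = 1 ∨ σ u v = -1)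
    (hp : IsShortestOfSign σ 1 p) (hn : IsShortestOfSign σ (-1) n) :
    adist G σ u v = if p.length ≤ n.length then (p.length : ℤ) else -(n.length : ℤ) := by
  have hdist := dist_eq_min_length hpm hp hn
  unfold adist
  split_ifs with hpos hle hle
  · rw [hdist, min_eq_left hle]
  · obtain ⟨q, -, hlen, hq⟩ := hpos
    have hq1 : walkSign σ q = 1 := by
      have := walkSign_eq_one_or_neg_one hpm q
      omega
    have := hp.length_le q hq1
    omega
  · have hlen : p.length = G.dist u v := by rw [hdist, min_eq_left hle]
    exact absurd ⟨p, p.isPath_of_length_eq_dist hlen, hlen, by simp [hp.walkSign_eq]⟩ hpos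
  · rw [hdist, min_eq_right (not_le.mp hle).le]

end AlgebraicDistance

section SheetSign

/-- The sign of a walk of `G` that lifts to a walk of positive edges from sheet `a` to sheet `b` of
the Extended Double Cover. The sheets of the vertices `v⁺` and `v⁻` are `true` and `false`. -/
def sheetSign (a b : Bool) : ℤ := if a = b then 1 else -1

@[simp]
theorem sheetSign_self (a : Bool) : sheetSign a a = 1 := if_pos rfl

theorem sheetSign_of_ne {a b : Bool} (h : a ≠ b) : sheetSign a b = -1 := if_neg h

theorem sheetSign_not_right (a b : Bool) : sheetSign a (!b) = -sheetSign a b := by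
  decide +revert

theorem sheetSign_mul_sheetSign (a b c : Bool) : sheetSign a b * sheetSign b c = sheetSign a c := by
  decide +revert

theorem sheetSign_right_injective (a : Bool) : Function.Injective (sheetSign a) := by
  decide +revert

theorem exists_eq_sheetSign {s : ℤ} (hs : s = 1 ∨ s = -1) (a : Bool) : ∃ b, s = sheetSign a b := by
  rcases hs with rfl | rfl
  · exact ⟨a, by simp⟩
  · exact ⟨!a, by simp [sheetSign_not_right]⟩

end SheetSign

section ExtendedDoubleCover

variable {G : SimpleGraph V} {σ : V → V → ℤ} {u v : V} {a b : Bool}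

theorem edcSign_eq_one_or_neg_one (x y : V × Bool) : edcSign x y = 1 ∨ edcSign x y = -1 := by
  unfold edcSign
  split_ifs <;> simp

theorem edcSign_of_fst_eq {x y : V × Bool} (h : x.1 = y.1) : edcSign x y = -1 := if_pos h

theorem edcSign_of_fst_ne {x y : V × Bool} (h : x.1 ≠ y.1) : edcSign x y = 1 := if_neg h

theorem EDCsg_adj_iff (hsymm : ∀ u v, σ u v = σ v u)
    (hpm : ∀ u v, G.Adj u v → σ u v = 1 ∨ σ u v = -1) {x y : V × Bool} :
    (EDCsg G σ hsymm).Adj x y ↔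
      (x.1 = y.1 ∧ x.2 ≠ y.2) ∨ (G.Adj x.1 y.1 ∧ σ x.1 y.1 = sheetSign x.2 y.2) := by
  refine or_congr_right (and_congr_right fun h => ?_)
  rcases hpm _ _ h with hσ | hσ <;> simp [hσ, sheetSign]

theorem exists_walk_of_EDCsg_walk (hsymm : ∀ u v, σ u v = σ v u)
    (hpm : ∀ u v, G.Adj u v → σ u v = 1 ∨ σ u v = -1) {x y : V × Bool}
    (q : (EDCsg G σ hsymm).Walk x y) :
    ∃ (p : G.Walk x.1 y.1) (k : ℕ), q.length = p.length + k ∧ walkSign edcSign q = (-1) ^ k ∧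
      walkSign σ p = (-1) ^ k * sheetSign x.2 y.2 := by
  induction q with
  | nil => exact ⟨Walk.nil, 0, by simp⟩
  | @cons x y z h q ih =>
    obtain ⟨p, k, hlen, hsign, hsheet⟩ := ih
    rcases (EDCsg_adj_iff hsymm hpm).mp h with ⟨hfst, hsnd⟩ | ⟨hadj, hσ⟩
    · refine ⟨p.copy hfst.symm rfl, k + 1, ?_, ?_, ?_⟩
      · simp [hlen, add_assoc]
      · rw [walkSign_cons, hsign, edcSign_of_fst_eq hfst, pow_succ']
      · have hcopy : walkSign σ (p.copy hfst.symm rfl) = walkSign σ p := by simp [walkSign]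
        rw [hcopy, hsheet, ← sheetSign_mul_sheetSign x.2 y.2 z.2, sheetSign_of_ne hsnd]
        ring
    · refine ⟨Walk.cons hadj p, k, ?_, ?_, ?_⟩
      · simp only [Walk.length_cons, hlen]
        ring
      · rw [walkSign_cons, hsign, edcSign_of_fst_ne hadj.ne, one_mul]
      · rw [walkSign_cons, hsheet, hσ, mul_left_comm, sheetSign_mul_sheetSign]

theorem exists_EDCsg_walk_length_eq (hsymm : ∀ u v, σ u v = σ v u)
    (hpm : ∀ u v, G.Adj u v → σ u v = 1 ∨ σ u v = -1) (p : G.Walk u v)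
    (hp : walkSign σ p = sheetSign a b) :
    ∃ q : (EDCsg G σ hsymm).Walk (u, a) (v, b),
      walkSign edcSign q = 1 ∧ q.length = p.length := by
  induction p generalizing a with
  | nil =>
    obtain rfl : a = b := sheetSign_right_injective a (by simpa using hp)
    exact ⟨Walk.nil, by simp⟩
  | @cons u m v h p ih =>
    obtain ⟨c, hc⟩ := exists_eq_sheetSign (hpm u m h) a
    have hpc : walkSign σ p = sheetSign c b :=
      calc walkSign σ p = sheetSign c a * (sheetSign a c * walkSign σ p) := by
            rw [← mul_assoc, sheetSign_mul_sheetSign, sheetSign_self, one_mul]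
        _ = sheetSign c a * sheetSign a b := by rw [← hc, ← hp, walkSign_cons]
        _ = sheetSign c b := sheetSign_mul_sheetSign c a b
    obtain ⟨q, hq, hlen⟩ := ih hpc
    have hadj : (EDCsg G σ hsymm).Adj (u, a) (m, c) :=
      (EDCsg_adj_iff hsymm hpm).mpr (Or.inr ⟨h, hc⟩)
    have hpos : edcSign (u, a) (m, c) = 1 := edcSign_of_fst_ne h.ne
    exact ⟨Walk.cons hadj q, by simp [hq, hpos], by simp [hlen]⟩

theorem exists_EDCsg_walk_length_eq_add_one (hsymm : ∀ u v, σ u v = σ v u)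
    (hpm : ∀ u v, G.Adj u v → σ u v = 1 ∨ σ u v = -1) (p : G.Walk u v)
    (hp : walkSign σ p = -sheetSign a b) :
    ∃ q : (EDCsg G σ hsymm).Walk (u, a) (v, b),
      walkSign edcSign q = -1 ∧ q.length = p.length + 1 := by
  obtain ⟨q, hq, hlen⟩ := exists_EDCsg_walk_length_eq (a := a) (b := !b) hsymm hpm p
    (by rw [hp, sheetSign_not_right])
  have hadj : (EDCsg G σ hsymm).Adj (v, !b) (v, b) := Or.inl ⟨rfl, by simp⟩
  exact ⟨q.append hadj.toWalk, by simp [hq, edcSign_of_fst_eq], by simp [hlen]⟩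

theorem IsShortestOfSign.exists_EDCsg_pos (hsymm : ∀ u v, σ u v = σ v u)
    (hpm : ∀ u v, G.Adj u v → σ u v = 1 ∨ σ u v = -1) {p : G.Walk u v}
    (hp : IsShortestOfSign σ (sheetSign a b) p) :
    ∃ q : (EDCsg G σ hsymm).Walk (u, a) (v, b),
      IsShortestOfSign edcSign 1 q ∧ q.length = p.length := by
  obtain ⟨q, hq, hlen⟩ := exists_EDCsg_walk_length_eq hsymm hpm p hp.walkSign_eq
  refine ⟨q, ⟨hq, fun q' hq' => ?_⟩, hlen⟩
  obtain ⟨p', k, hlen', hsign', hsheet'⟩ := exists_walk_of_EDCsg_walk hsymm hpm q'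
  have := hp.length_le p' (by rw [hsheet', ← hsign', hq', one_mul])
  omega

theorem IsShortestOfSign.exists_EDCsg_neg (hsymm : ∀ u v, σ u v = σ v u)
    (hpm : ∀ u v, G.Adj u v → σ u v = 1 ∨ σ u v = -1) {p : G.Walk u v}
    (hp : IsShortestOfSign σ (-sheetSign a b) p) :
    ∃ q : (EDCsg G σ hsymm).Walk (u, a) (v, b),
      IsShortestOfSign edcSign (-1) q ∧ q.length = p.length + 1 := by
  obtain ⟨q, hq, hlen⟩ := exists_EDCsg_walk_length_eq_add_one hsymm hpm p hp.walkSign_eq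
  refine ⟨q, ⟨hq, fun q' hq' => ?_⟩, hlen⟩
  obtain ⟨p', k, hlen', hsign', hsheet'⟩ := exists_walk_of_EDCsg_walk hsymm hpm q'
  have hk : k ≠ 0 := by
    rintro rfl
    simp [hq'] at hsign'
  have := hp.length_le p' (by rw [hsheet', ← hsign', hq', neg_one_mul])
  omega

theorem adist_EDCsg_eq_ite (hsymm : ∀ u v, σ u v = σ v u)
    (hpm : ∀ u v, G.Adj u v → σ u v = 1 ∨ σ u v = -1) {p n : G.Walk u v}
    (hp : IsShortestOfSign σ (sheetSign a b) p) (hn : IsShortestOfSign σ (-sheetSign a b) n) :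
    adist (EDCsg G σ hsymm) edcSign (u, a) (v, b) =
      if p.length ≤ n.length + 1 then (p.length : ℤ) else -((n.length : ℤ) + 1) := by
  obtain ⟨p', hp', hplen⟩ := hp.exists_EDCsg_pos hsymm hpm
  obtain ⟨n', hn', hnlen⟩ := hn.exists_EDCsg_neg hsymm hpm
  rw [adist_eq_ite (fun x y _ => edcSign_eq_one_or_neg_one x y) hp' hn', hplen, hnlen]
  push_cast
  rfl

end ExtendedDoubleCover

section NegativeClosedWalk

variable {G : SimpleGraph V} {σ : V → V → ℤ} {x y : V}

theorem exists_walks_of_walkSign_eq_neg_one (hsymm : ∀ u v, σ u v = σ v u)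
    (hpm : ∀ u v, G.Adj u v → σ u v = 1 ∨ σ u v = -1) {C : G.Walk x x} (hy : y ∈ C.support)
    (hneg : walkSign σ C = -1) :
    ∃ P N : G.Walk x y, walkSign σ P = 1 ∧ walkSign σ N = -1 ∧
      P.length + N.length = C.length := by
  obtain ⟨A, B, rfl⟩ := Walk.mem_support_iff_exists_append.mp hy
  rw [walkSign_append] at hneg
  rcases walkSign_eq_one_or_neg_one hpm A with hA | hA
  · exact ⟨A, B.reverse, hA, by simpa [walkSign_reverse hsymm, hA] using hneg, by simp⟩
  · exact ⟨B.reverse, A, by simpa [walkSign_reverse hsymm, hA] using hneg, hA, by simp [add_comm]⟩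

theorem isShortestOfSign_of_le_length (hsymm : ∀ u v, σ u v = σ v u) {P Q : G.Walk x y}
    (hPQ : walkSign σ P * walkSign σ Q = -1)
    (hmin : ∀ w : G.Walk x x, walkSign σ w = -1 → P.length + Q.length ≤ w.length) :
    IsShortestOfSign σ (walkSign σ P) P := by
  refine ⟨rfl, fun R hR => ?_⟩
  have hRQ := hmin (R.append Q.reverse) (by rw [walkSign_append, walkSign_reverse hsymm, hR, hPQ])
  simpa using hRQ

theorem exists_isShortestOfSign_of_walkSign_eq_neg_one (hsymm : ∀ u v, σ u v = σ v u)
    (hpm : ∀ u v, G.Adj u v → σ u v = 1 ∨ σ u v = -1) {C : G.Walk x x} (hy : y ∈ C.support)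
    (hneg : walkSign σ C = -1)
    (hmin : ∀ w : G.Walk x x, walkSign σ w = -1 → C.length ≤ w.length) :
    ∃ P N : G.Walk x y, IsShortestOfSign σ 1 P ∧ IsShortestOfSign σ (-1) N ∧
      P.length + N.length = C.length := by
  obtain ⟨P, N, hP, hN, hlen⟩ := exists_walks_of_walkSign_eq_neg_one hsymm hpm hy hneg
  refine ⟨P, N, ?_, ?_, hlen⟩
  · rw [← hP]
    exact isShortestOfSign_of_le_length hsymm (Q := N) (by simp [hP, hN]) (by rwa [hlen])
  · rw [← hN]
    exact isShortestOfSign_of_le_length hsymm (Q := P) (by simp [hP, hN])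
      (by rwa [add_comm, hlen])

theorem adist_EDC_neg_general (hsymm : ∀ u v, σ u v = σ v u)
    (hpm : ∀ u v, G.Adj u v → σ u v = 1 ∨ σ u v = -1) {C : G.Walk x x} (hy : y ∈ C.support)
    (hneg : walkSign σ C = -1)
    (hmin : ∀ w : G.Walk x x, walkSign σ w = -1 → C.length ≤ w.length)
    {p : ℤ} (hp : adist G σ x y = p) (hpneg : p < 0) :
    adist (EDCsg G σ hsymm) edcSign (x, true) (y, false) = -p ∧
    adist (EDCsg G σ hsymm) edcSign (x, false) (y, true) = -p ∧
    (G.dist x y = C.length / 2 →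
      adist (EDCsg G σ hsymm) edcSign (x, true) (y, true) = (C.length : ℤ) + p ∧
      adist (EDCsg G σ hsymm) edcSign (x, false) (y, false) = (C.length : ℤ) + p ∧
      (C.length : ℤ) + p = (((C.length + 1) / 2 : ℕ) : ℤ)) ∧
    (G.dist x y ≠ C.length / 2 →
      adist (EDCsg G σ hsymm) edcSign (x, true) (y, true) = p - 1 ∧
      adist (EDCsg G σ hsymm) edcSign (x, false) (y, false) = p - 1) := by
  obtain ⟨P, N, hP, hN, hlen⟩ :=
    exists_isShortestOfSign_of_walkSign_eq_neg_one hsymm hpm hy hneg hmin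
  have hpN : p = -(N.length : ℤ) ∧ N.length < P.length := by
    have := adist_eq_ite hpm hP hN
    split_ifs at this <;> omega
  have hdist : G.dist x y = N.length := by
    rw [dist_eq_min_length hpm hP hN, min_eq_right hpN.2.le]
  have hopp (a b : Bool) (hab : a ≠ b) : adist (EDCsg G σ hsymm) edcSign (x, a) (y, b) = -p := by
    have hs := sheetSign_of_ne hab
    rw [adist_EDCsg_eq_ite hsymm hpm (hs ▸ hN) (by rwa [hs, neg_neg]), if_pos (by omega)]
    omega
  have hsame (a : Bool) : adist (EDCsg G σ hsymm) edcSign (x, a) (y, a) =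
      if P.length ≤ N.length + 1 then (P.length : ℤ) else -((N.length : ℤ) + 1) :=
    adist_EDCsg_eq_ite hsymm hpm (by rwa [sheetSign_self]) (by rwa [sheetSign_self])
  have hhalf : G.dist x y = C.length / 2 ↔ P.length ≤ N.length + 1 := by omega
  refine ⟨hopp _ _ (by simp), hopp _ _ (by simp), fun h => ?_, fun h => ?_⟩
  · rw [hsame, hsame, if_pos (hhalf.mp h)]
    omega
  · rw [hsame, hsame, if_neg (mt hhalf.mpr h)]
    omega

end NegativeClosedWalk

/-- algebraic distances in the Extended Double Cover, for vertices
`x, y` on a common negative cycle of length `g` with `ad_{(G,σ)}(x,y) = p < 0`. -/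
theorem adist_EDC_neg {V : Type*} [Fintype V]
    (G : SimpleGraph V) (σ : V → V → ℤ)
    (hsymm : ∀ u v, σ u v = σ v u) (hpm : ∀ u v, G.Adj u v → σ u v = 1 ∨ σ u v = -1)
    (g : ℕ) (hg : 0 < g) (hconn : G.Connected) (hwide : gWide G σ g)
    (x y : V) (C : G.Walk x x) (hC : C.IsCycle) (hlen : C.length = g)
    (hy : y ∈ C.support) (hneg : walkSign σ C = -1)
    (p : ℤ) (hp : adist G σ x y = p) (hpneg : p < 0) :
    adist (EDCsg G σ hsymm) edcSign (x, true) (y, false) = -p ∧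
    adist (EDCsg G σ hsymm) edcSign (x, false) (y, true) = -p ∧
    (G.dist x y = g / 2 →
      adist (EDCsg G σ hsymm) edcSign (x, true) (y, true) = (g : ℤ) + p ∧
      adist (EDCsg G σ hsymm) edcSign (x, false) (y, false) = (g : ℤ) + p ∧
      (g : ℤ) + p = (((g + 1) / 2 : ℕ) : ℤ)) ∧
    (G.dist x y ≠ g / 2 →
      adist (EDCsg G σ hsymm) edcSign (x, true) (y, true) = p - 1 ∧
      adist (EDCsg G σ hsymm) edcSign (x, false) (y, false) = p - 1) := by
  subst hlen
  exact adist_EDC_neg_general hsymm hpm hy hneg (fun w hw => (hwide.2 x w (by omega)).1) hp hpneg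

end SignedPaper
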